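/- Let D be a domain in ℂ^n, let P and P̃ be polydiscs with P ⊂ D ∩ P̃, P nonempty. Assume that for every z ∈ P and every complex (affine) line L passing through z, the set (L ∩ P̃) \ D is a polar subset of L (identified with ℂ). Then D ∩ P̃ is connected. -/

import Mathlib

open MeasureTheory Filter Topology Metric Set
open scoped ENNReal NNReal

/-- Truncated circle average of an `EReal`-valued function: the average over the circle of
center `c` and radius `R` of the function truncated below at `-n`. -/
noncomputable def circleAvgTrunc (u : ℂ → EReal) (c : ℂ) (R : ℝ) (n : ℕ) : ℝ :=
  (2 * Real.pi)⁻¹ * ∫ θ in (0:ℝ)..(2 * Real.pi),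
    (max (u (c + R * Complex.exp (θ * Complex.I))) (-(n : ℝ) : EReal)).toReal

/-- `u` is subharmonic on `Ω ⊆ ℂ`: values in `[-∞, ∞)`, upper semicontinuous on `Ω`, and for
every closed disc contained in `Ω` the value at the center is at most the mean over the
boundary circle (in the extended sense, via decreasing truncations). -/
def SubharmonicOn (u : ℂ → EReal) (Ω : Set ℂ) : Prop :=
  UpperSemicontinuousOn u Ω ∧ (∀ z ∈ Ω, u z < ⊤) ∧
    ∀ c ∈ Ω, ∀ R : ℝ, 0 < R → Metric.closedBall c R ⊆ Ω →
      u c ≤ ⨅ n : ℕ, (circleAvgTrunc u c R n : EReal)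

/-- `u` is plurisubharmonic on `Ω`: values in `[-∞, ∞)`, upper semicontinuous on `Ω`, and its
restriction to every complex line is subharmonic. -/
def PlurisubharmonicOn {E : Type*} [NormedAddCommGroup E] [NormedSpace ℂ E]
    (u : E → EReal) (Ω : Set E) : Prop :=
  UpperSemicontinuousOn u Ω ∧ (∀ z ∈ Ω, u z < ⊤) ∧
    ∀ a b : E, SubharmonicOn (fun lam : ℂ => u (a + lam • b)) {lam : ℂ | a + lam • b ∈ Ω}

/-- A set `P ⊆ ℂ` is polar. -/
def PolarSet (P : Set ℂ) : Prop :=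
  ∀ z ∈ P, ∃ U : Set ℂ, IsOpen U ∧ IsConnected U ∧ z ∈ U ∧
    ∃ u : ℂ → EReal, SubharmonicOn u U ∧ (∃ x ∈ U, u x ≠ ⊥) ∧ ∀ x ∈ P ∩ U, u x = ⊥

/-- A set `P ⊆ ℂⁿ` is pluripolar. -/
def PluripolarSet {E : Type*} [NormedAddCommGroup E] [NormedSpace ℂ E] (P : Set E) : Prop :=
  ∀ z ∈ P, ∃ U : Set E, IsOpen U ∧ IsConnected U ∧ z ∈ U ∧
    ∃ u : E → EReal, PlurisubharmonicOn u U ∧ (∃ x ∈ U, u x ≠ ⊥) ∧ ∀ x ∈ P ∩ U, u x = ⊥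

/-- A domain `D` is pseudoconvex if `z ↦ -log dist(z, ∂D)` is plurisubharmonic on `D`. -/
def IsPseudoconvex {E : Type*} [NormedAddCommGroup E] [NormedSpace ℂ E] (D : Set E) : Prop :=
  PlurisubharmonicOn (fun z => ((- Real.log (Metric.infDist z Dᶜ) : ℝ) : EReal)) D

/-- The square-integrable holomorphic functions on an open set `Ω`. -/
def L2h {E : Type*} [NormedAddCommGroup E] [NormedSpace ℂ E] [MeasureSpace E]
    (Ω : Set E) : Set (E → ℂ) :=
  {f | DifferentiableOn ℂ f Ω ∧ (∫⁻ z in Ω, (‖f z‖₊ : ℝ≥0∞) ^ 2) < ⊤}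

/-- The Bergman kernel of `Ω` on the diagonal,
`K_Ω(z) = sup { |f(z)|²/‖f‖²_{L²(Ω)} : f ∈ L²ₕ(Ω), f ≢ 0 }`. -/
noncomputable def bergmanKernel {E : Type*} [NormedAddCommGroup E] [NormedSpace ℂ E]
    [MeasureSpace E] (Ω : Set E) (z : E) : ℝ≥0∞ :=
  ⨆ (f : E → ℂ) (_ : f ∈ L2h Ω) (_ : ∃ w ∈ Ω, f w ≠ 0),
    (‖f z‖₊ : ℝ≥0∞) ^ 2 / ∫⁻ w in Ω, (‖f w‖₊ : ℝ≥0∞) ^ 2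

/-- `D` is an `L²ₕ`-domain of holomorphy: there are no domains `D₀, D₁` with
`∅ ≠ D₀ ⊆ D₁ ∩ D`, `D₁ ⊄ D`, such that every `f ∈ L²ₕ(D)` extends holomorphically to `D₁`
(agreeing with `f` on `D₀`). -/
def IsL2hDomainOfHolomorphy {E : Type*} [NormedAddCommGroup E] [NormedSpace ℂ E]
    [MeasureSpace E] (D : Set E) : Prop :=
  ¬ ∃ D0 D1 : Set E, IsOpen D0 ∧ IsConnected D0 ∧ IsOpen D1 ∧ IsConnected D1 ∧
      D0 ⊆ D1 ∩ D ∧ ¬ (D1 ⊆ D) ∧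
      ∀ f ∈ L2h D, ∃ F : E → ℂ, DifferentiableOn ℂ F D1 ∧ Set.EqOn F f D0

/-- `w` is a regular boundary point of the domain `D ⊆ ℂ`. -/
def RegularBoundaryPt (D : Set ℂ) (w : ℂ) : Prop :=
  ∃ U : Set ℂ, IsOpen U ∧ w ∈ U ∧ ∃ u : ℂ → EReal, SubharmonicOn u (U ∩ D) ∧
    (∀ z ∈ U ∩ D, u z < 0) ∧ Tendsto u (𝓝[U ∩ D] w) (𝓝 (0 : EReal))

/-- The (pluricomplex) Green function of a domain `D ⊆ ℂ` with logarithmic pole at `p`. -/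
noncomputable def greenFn (D : Set ℂ) (p z : ℂ) : EReal :=
  sSup {v : EReal | ∃ u : ℂ → EReal, SubharmonicOn u D ∧ (∀ x ∈ D, u x < 0) ∧
    (∃ C : ℝ, ∀ᶠ x in 𝓝 p, u x ≤ ((Real.log ‖x - p‖ + C : ℝ) : EReal)) ∧ v = u z}

/-- A polydisc in `ℂⁿ` with centre `c` and multiradius `r`. -/
def polydisc {n : ℕ} (c : Fin n → ℂ) (r : Fin n → ℝ) : Set (Fin n → ℂ) :=
  {z | ∀ i, ‖z i - c i‖ < r i}

theorem peak_aux {u : ℂ → EReal} {Ω : Set ℂ} (hu : SubharmonicOn u Ω) {p : ℂ} {s : ℝ}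
    (hs : 0 < s) (hsub : closedBall p s ⊆ Ω) {G : ℂ → ℂ}
    (hG : DifferentiableOn ℂ G (closedBall p s))
    (hle : ∀ z ∈ sphere p s, u z ≤ ((G z).re : EReal)) : u p ≤ ((G p).re : EReal) := by
  have hcm : ∀ θ : ℝ, circleMap p s θ ∈ sphere p s := fun θ => circleMap_mem_sphere p hs.le θ
  have hcmc : ∀ θ : ℝ, circleMap p s θ ∈ closedBall p s :=
    fun θ => sphere_subset_closedBall (hcm θ)
  have hGcont : Continuous (fun θ : ℝ => G (circleMap p s θ)) :=
    hG.continuousOn.comp_continuous (continuous_circleMap p s) hcmc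
  have hcontre : Continuous (fun θ : ℝ => (G (circleMap p s θ)).re) :=
    Complex.continuous_re.comp hGcont
  obtain ⟨K, hK⟩ : ∃ K : ℝ, ∀ z ∈ closedBall p s, ‖G z‖ ≤ K :=
    (isCompact_closedBall p s).exists_bound_of_continuousOn hG.continuousOn
  obtain ⟨n, hn⟩ := exists_nat_ge K
  refine (hu.2.2 p (hsub (mem_closedBall_self hs.le)) s hs hsub).trans ?_
  refine (iInf_le _ n).trans ?_
  rw [EReal.coe_le_coe_iff]
  have hmean : Real.circleAverage G p s = G p := by
    apply circleAverage_of_differentiable_on_off_countable (s := ∅) countable_empty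
    · rw [abs_of_pos hs]; exact hG.continuousOn
    · intro z hz
      rw [abs_of_pos hs] at hz
      exact hG.differentiableAt (mem_of_superset (isOpen_ball.mem_nhds hz.1) ball_subset_closedBall)
  have hre : (2 * Real.pi)⁻¹ * ∫ θ in (0:ℝ)..(2 * Real.pi), (G (circleMap p s θ)).re = (G p).re := by
    rw [← hmean, Real.circleAverage_def, Complex.smul_re, smul_eq_mul]
    congr 1
    have := (Complex.reCLM).intervalIntegral_comp_comm
      (hGcont.intervalIntegrable (μ := volume) 0 (2 * Real.pi))
    simpa using this
  rw [← hre]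
  unfold circleAvgTrunc
  have hbd : ∀ θ : ℝ, (max (u (circleMap p s θ)) (-(n : ℝ) : EReal)).toReal
      ≤ (G (circleMap p s θ)).re := by
    intro θ
    have h1 : max (u (circleMap p s θ)) (-(n : ℝ) : EReal) ≤ ((G (circleMap p s θ)).re : EReal) := by
      refine max_le (hle _ (hcm θ)) ?_
      rw [← EReal.coe_neg, EReal.coe_le_coe_iff]
      have h2 := hK _ (hcmc θ)
      have h3 := (abs_le.1 (Complex.abs_re_le_norm (G (circleMap p s θ)))).1
      linarith
    have := EReal.toReal_le_toReal h1 ?_ (EReal.coe_ne_top _)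
    · simpa using this
    · rw [← EReal.coe_neg]
      exact ne_of_gt (lt_of_lt_of_le (EReal.bot_lt_coe _) (le_max_right _ _))
  have hlb : ∀ θ : ℝ, -(n : ℝ) ≤ (max (u (circleMap p s θ)) (-(n : ℝ) : EReal)).toReal := by
    intro θ
    have h1 : ((-(n : ℝ) : ℝ) : EReal) ≤ max (u (circleMap p s θ)) (-(n : ℝ) : EReal) := by
      rw [EReal.coe_neg]; exact le_max_right _ _
    have := EReal.toReal_le_toReal h1 (EReal.coe_ne_bot _) ?_
    · rwa [EReal.toReal_coe] at this
    · refine ne_of_lt (max_lt (hu.2.1 _ (hsub (hcmc θ))) ?_)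
      rw [← EReal.coe_neg]; exact EReal.coe_lt_top _
  have husc : UpperSemicontinuous (fun θ : ℝ => u (circleMap p s θ)) := by
    rw [← upperSemicontinuousOn_univ_iff]
    exact hu.1.comp (continuous_circleMap p s).continuousOn (fun θ _ => hsub (hcmc θ))
  have hmeas : Measurable (fun θ : ℝ => (max (u (circleMap p s θ)) (-(n : ℝ) : EReal)).toReal) :=
    measurable_ereal_toReal.comp (husc.measurable.max measurable_const)
  have hint : IntervalIntegrable
      (fun θ : ℝ => (max (u (circleMap p s θ)) (-(n : ℝ) : EReal)).toReal) volume 0 (2 * Real.pi) := by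
    have hc : IntervalIntegrable (fun θ : ℝ => |(G (circleMap p s θ)).re| + n) volume 0 (2 * Real.pi) :=
      (hcontre.abs.add continuous_const).intervalIntegrable _ _
    refine hc.mono_fun hmeas.aestronglyMeasurable (ae_of_all _ fun θ => ?_)
    have h1 := hbd θ
    have h2 := hlb θ
    have h3 := le_abs_self (G (circleMap p s θ)).re
    have h4 := abs_nonneg (G (circleMap p s θ)).re
    have h5 : (0:ℝ) ≤ n := Nat.cast_nonneg n
    beta_reduce
    rw [Real.norm_eq_abs, Real.norm_eq_abs, abs_le]
    rw [abs_of_nonneg (by positivity)]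
    constructor <;> linarith
  refine mul_le_mul_of_nonneg_left ?_ (by positivity)
  exact intervalIntegral.integral_mono_on (by positivity) hint
    (hcontre.intervalIntegrable _ _) (fun θ _ => hbd θ)

theorem annulus_aux {u : ℂ → EReal} {Ω : Set ℂ} (hu : SubharmonicOn u Ω)
    {A : Set ℂ} (hA : IsOpen A) {b : ℂ} {R ρ : ℝ} (hρ : 0 < ρ)
    (hsub : closedBall b R ⊆ Ω) (hdisj : ∀ z ∈ A, ρ ≤ dist z b)
    (hfr : ∀ z ∈ closure A, z ∉ A → z ∈ closedBall b R → u z = ⊥) :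
    ∀ z ∈ A, z ∈ ball b R → u z = ⊥ := by
  intro z0 hz0A hz0R
  by_contra hne
  have hcl : ∀ z ∈ closure A, ρ ≤ dist z b := by
    intro z hz
    exact closure_minimal (t := {z | ρ ≤ dist z b}) hdisj
      (isClosed_le continuous_const (by fun_prop)) hz
  have hRpos : 0 < R := lt_of_le_of_lt dist_nonneg hz0R
  have husc : UpperSemicontinuousOn u (closedBall b R) := hu.1.mono hsub
  obtain ⟨q, hq, hqmax⟩ := husc.exists_isMaxOn ⟨b, mem_closedBall_self hRpos.le⟩
    (isCompact_closedBall b R)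
  obtain ⟨M, hM⟩ : ∃ M : ℝ, ∀ z ∈ closedBall b R, u z ≤ (M : EReal) := by
    have h1 := hu.2.1 q (hsub hq)
    obtain ⟨M, hM1, -⟩ := EReal.lt_iff_exists_real_btwn.1 h1
    exact ⟨M, fun z hz => (hqmax hz).trans hM1.le⟩
  have hz0c : z0 ∈ closedBall b R := ball_subset_closedBall hz0R
  obtain ⟨t0, ht0⟩ : ∃ t : ℝ, u z0 = t :=
    ⟨(u z0).toReal, (EReal.coe_toReal (hu.2.1 z0 (hsub hz0c)).ne hne).symm⟩
  set f : ℂ → ℂ := fun z => (z - b)⁻¹ with hf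
  have hd0 : ρ ≤ ‖z0 - b‖ := by rw [← dist_eq_norm]; exact hdisj z0 hz0A
  have hd1 : ‖z0 - b‖ < R := by rw [← dist_eq_norm]; exact hz0R
  have hgap : 0 < ‖f z0‖ ^ 2 - (R⁻¹) ^ 2 := by
    have h1 : R⁻¹ < ‖f z0‖ := by
      simp only [hf, norm_inv]
      exact inv_strictAnti₀ (by linarith) hd1
    have h2 : 0 < R⁻¹ := by positivity
    nlinarith
  obtain ⟨N, hN0, hN⟩ : ∃ N : ℝ, 0 < N ∧ M < t0 + N * (‖f z0‖ ^ 2 - (R⁻¹) ^ 2) := by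
    refine ⟨(|M - t0| + 1) / (‖f z0‖ ^ 2 - (R⁻¹) ^ 2), by positivity, ?_⟩
    rw [div_mul_cancel₀ _ hgap.ne']
    have := le_abs_self (M - t0)
    linarith
  set K := closure A ∩ closedBall b R with hK
  have hKc : IsCompact K := (isCompact_closedBall b R).inter_left isClosed_closure
  have hne_b : ∀ z ∈ closure A, z - b ≠ 0 := by
    intro z hz h
    have := hcl z hz
    rw [dist_eq_norm, h, norm_zero] at this
    linarith
  set φ : ℂ → ℝ := fun z => N * (‖f z‖ ^ 2 - (R⁻¹) ^ 2) with hφ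
  have hφc : ContinuousOn φ K := by
    have : ContinuousOn f K :=
      (continuousOn_id.sub continuousOn_const).inv₀ (fun z hz => hne_b z hz.1)
    exact continuousOn_const.mul ((this.norm.pow 2).sub continuousOn_const)
  have hw : UpperSemicontinuousOn (fun z => u z + (φ z : EReal)) K := by
    refine (hu.1.mono (fun z hz => hsub hz.2)).add'
      (continuous_coe_real_ereal.comp_continuousOn hφc).upperSemicontinuousOn ?_
    intro z hz
    exact EReal.continuousAt_add (Or.inr (EReal.coe_ne_bot _)) (Or.inr (EReal.coe_ne_top _))
  have hz0K : z0 ∈ K := ⟨subset_closure hz0A, hz0c⟩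
  obtain ⟨p, hp, hpmax⟩ := hw.exists_isMaxOn ⟨z0, hz0K⟩ hKc
  have hpM : (M : EReal) < u p + (φ p : EReal) := by
    refine lt_of_lt_of_le ?_ (hpmax hz0K)
    show (M : EReal) < u z0 + (φ z0 : EReal)
    rw [ht0, ← EReal.coe_add, EReal.coe_lt_coe_iff]
    exact hN
  have hpbot : u p ≠ ⊥ := by
    intro h
    rw [h, EReal.bot_add] at hpM
    exact not_lt_bot hpM
  have hpA : p ∈ A := by
    by_contra h
    exact hpbot (hfr p hp.1 h hp.2)
  obtain ⟨t, ht⟩ : ∃ t : ℝ, u p = t :=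
    ⟨(u p).toReal, (EReal.coe_toReal (hu.2.1 p (hsub hp.2)).ne hpbot).symm⟩
  have hpR : dist p b < R := by
    refine lt_of_le_of_ne hp.2 ?_
    intro h
    have h1 := hM p hp.2
    have h2 : φ p = 0 := by
      simp only [hφ, hf, norm_inv]
      rw [← dist_eq_norm, h]; ring
    rw [h2, EReal.coe_zero, add_zero] at hpM
    exact absurd h1 (not_le.2 hpM)
  have hopen : IsOpen (A ∩ ball b R) := hA.inter isOpen_ball
  obtain ⟨s, hs, hsb⟩ := Metric.nhds_basis_closedBall.mem_iff.1 (hopen.mem_nhds ⟨hpA, hpR⟩)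
  have hfd : DifferentiableOn ℂ f (closedBall p s) := by
    intro z hz
    have := hne_b z (subset_closure (hsb hz).1)
    exact ((differentiableAt_id.sub_const b).inv this).differentiableWithinAt
  set m : ℝ := s / (R * R) with hm
  have hmpos : 0 < m := by positivity
  have key := peak_aux hu hs (fun z hz => hsub (ball_subset_closedBall (hsb hz).2))
    (G := fun z => ((t - N * m ^ 2 : ℝ) : ℂ)
      - ((2 * N : ℝ) : ℂ) * ((starRingEnd ℂ) (f p) * (f z - f p)))
    ((differentiableOn_const _).sub ((differentiableOn_const _).mul
      ((differentiableOn_const _).mul (hfd.sub (differentiableOn_const _))))) ?_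
  · rw [ht, EReal.coe_le_coe_iff] at key
    simp only [sub_self, mul_zero, sub_zero, Complex.ofReal_re] at key
    have : 0 < N * m ^ 2 := by positivity
    linarith
  · intro z hz
    have hzc := sphere_subset_closedBall hz
    have hzA := (hsb hzc).1
    have hzR : ‖z - b‖ < R := by rw [← dist_eq_norm]; exact (hsb hzc).2
    have hzmax : u z + (φ z : EReal) ≤ u p + (φ p : EReal) :=
      hpmax (show z ∈ K from ⟨subset_closure hzA, ball_subset_closedBall (hsb hzc).2⟩)
    by_cases hzb : u z = ⊥
    · rw [hzb]; exact bot_le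
    have hzt := EReal.coe_toReal (hu.2.1 z (hsub (ball_subset_closedBall (hsb hzc).2))).ne hzb
    rw [← hzt] at hzmax ⊢
    rw [ht, ← EReal.coe_add, ← EReal.coe_add, EReal.coe_le_coe_iff] at hzmax
    rw [EReal.coe_le_coe_iff]
    have hzne := hne_b z (subset_closure hzA)
    have hpne := hne_b p hp.1
    have hmle : m ≤ ‖f z - f p‖ := by
      have e : f z - f p = (p - z) / ((z - b) * (p - b)) := by
        simp only [hf]; field_simp; ring
      have hn : ‖p - z‖ = s := by rw [← dist_eq_norm, dist_comm]; exact hz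
      rw [e, norm_div, norm_mul, hn, hm]
      have h1 : 0 < ‖z - b‖ := norm_pos_iff.2 hzne
      have h2 : 0 < ‖p - b‖ := norm_pos_iff.2 hpne
      have h3 : ‖p - b‖ < R := by rw [← dist_eq_norm]; exact hpR
      gcongr
    have hsq : m ^ 2 ≤ ‖f z - f p‖ ^ 2 := by gcongr
    have hexp : ‖f z‖ ^ 2 = ‖f p‖ ^ 2 + 2 * ((starRingEnd ℂ) (f p) * (f z - f p)).re
        + ‖f z - f p‖ ^ 2 := by
      simp only [← Complex.normSq_eq_norm_sq, Complex.normSq_apply, Complex.mul_re,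
        Complex.sub_re, Complex.sub_im, Complex.conj_re, Complex.conj_im]
      ring
    simp only [hφ] at hzmax
    rw [Complex.sub_re, Complex.ofReal_re, Complex.re_ofReal_mul]
    rw [hexp] at hzmax
    have := mul_le_mul_of_nonneg_left hsq hN0.le
    linarith

theorem bot_aux {u : ℂ → EReal} {U : Set ℂ} (hu : SubharmonicOn u U) (hU : IsOpen U)
    (hc : IsPreconnected U) {V : Set ℂ} (hV : IsOpen V) (hVne : (U ∩ V).Nonempty)
    (hbot : ∀ z ∈ V, u z = ⊥) : ∀ z ∈ U, u z = ⊥ := by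
  have hint : ∀ z ∈ interior {z | u z = ⊥}, u z = ⊥ := fun z hz => by
    have h : z ∈ {z | u z = ⊥} := interior_subset hz
    exact h
  have hsub : U ⊆ interior {z | u z = ⊥} := by
    refine hc.subset_of_closure_inter_subset isOpen_interior
      (hVne.mono (inter_subset_inter_right _ (interior_maximal hbot hV))) ?_
    rintro z ⟨hz, hzU⟩
    obtain ⟨R, hR, hRU⟩ := Metric.nhds_basis_closedBall.mem_iff.1 (hU.mem_nhds hzU)
    obtain ⟨b, hb, hbz⟩ := Metric.mem_closure_iff.1 hz (R / 3) (by positivity)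
    obtain ⟨ρ, hρ, hρs⟩ := Metric.nhds_basis_closedBall.mem_iff.1 (isOpen_interior.mem_nhds hb)
    have hsubR : closedBall b (R / 2) ⊆ U := by
      refine Subset.trans (closedBall_subset_closedBall' ?_) hRU
      rw [dist_comm]; linarith
    have hbR := annulus_aux hu (A := (closedBall b ρ)ᶜ) isClosed_closedBall.isOpen_compl hρ hsubR
      (fun w hw => by
        have : ¬ dist w b ≤ ρ := hw
        linarith)
      (fun w _ hw2 _ => hint _ (hρs (not_not.1 hw2)))
    refine (interior_maximal (s := {z | u z = ⊥}) (t := ball b (R / 2)) ?_ isOpen_ball) ?_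
    · intro w hw
      by_cases h : w ∈ closedBall b ρ
      · exact hint _ (hρs h)
      · exact hbR w h hw
    · rw [mem_ball]; linarith
  exact fun z hz => hint _ (hsub hz)

theorem planar_aux {G D : Set ℂ} (hG : IsOpen G) (hGc : IsPreconnected G) (hD : IsOpen D)
    (hpol : PolarSet {z | z ∈ G ∧ z ∉ D}) : IsPreconnected (G ∩ D) := by
  rw [isPreconnected_iff_subset_of_disjoint]
  intro A' B' hA' hB' hcov hdis
  by_contra hcon
  push Not at hcon
  obtain ⟨hnA, hnB⟩ := hcon
  set A := G ∩ D ∩ A' with hAdef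
  set B := G ∩ D ∩ B' with hBdef
  have hA : IsOpen A := (hG.inter hD).inter hA'
  have hB : IsOpen B := (hG.inter hD).inter hB'
  have hAB : ∀ z ∈ A, z ∉ B := by
    intro z hz hz'
    have : z ∈ G ∩ D ∩ (A' ∩ B') := ⟨hz.1, hz.2, hz'.2⟩
    rw [hdis] at this
    exact this
  have hAne : A.Nonempty := by
    obtain ⟨z, hz, hz'⟩ := not_subset.1 hnB
    exact ⟨z, hz, (hcov hz).resolve_right hz'⟩
  have hBne : B.Nonempty := by
    obtain ⟨z, hz, hz'⟩ := not_subset.1 hnA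
    exact ⟨z, hz, (hcov hz).resolve_left hz'⟩
  have hunion : ∀ z ∈ G, z ∈ D → z ∈ A ∨ z ∈ B := by
    intro z hz hz'
    rcases hcov ⟨hz, hz'⟩ with h | h
    · exact Or.inl ⟨⟨hz, hz'⟩, h⟩
    · exact Or.inr ⟨⟨hz, hz'⟩, h⟩
  have hdense : G ⊆ closure A ∪ closure B := by
    intro z hz
    by_contra hzn
    rw [← closure_union] at hzn
    have hzE : z ∈ {z | z ∈ G ∧ z ∉ D} := by
      refine ⟨hz, fun h => hzn (subset_closure ?_)⟩
      exact hunion z hz h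
    obtain ⟨U, hU, hUc, hzU, u, hu, ⟨x, hx, hxb⟩, hbot⟩ := hpol z hzE
    refine hxb (bot_aux hu hU hUc.isPreconnected
      (V := U ∩ (G ∩ (closure (A ∪ B))ᶜ)) (hU.inter (hG.inter isClosed_closure.isOpen_compl))
      ⟨z, hzU, hzU, hz, hzn⟩ ?_ x hx)
    rintro w ⟨hwU, hwG, hwn⟩
    refine hbot w ⟨⟨hwG, fun h => hwn (subset_closure ?_)⟩, hwU⟩
    exact hunion w hwG h
  obtain ⟨z, hzG, hzA, hzB⟩ := isPreconnected_closed_iff.1 hGc _ _ isClosed_closure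
    isClosed_closure hdense
    (hAne.mono fun x hx => ⟨hx.1.1, subset_closure hx⟩)
    (hBne.mono fun x hx => ⟨hx.1.1, subset_closure hx⟩)
  have hclA : ∀ w ∈ closure A, w ∉ B := by
    intro w hw hwB
    obtain ⟨y, hy1, hy2⟩ := mem_closure_iff.1 hw B hB hwB
    exact hAB y hy2 hy1
  have hclB : ∀ w ∈ closure B, w ∉ A := by
    intro w hw hwA
    obtain ⟨y, hy1, hy2⟩ := mem_closure_iff.1 hw A hA hwA
    exact hAB y hy1 hy2
  have hzE : z ∈ {z | z ∈ G ∧ z ∉ D} :=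
    ⟨hzG, fun h => (hunion z hzG h).elim (hclB z hzB) (hclA z hzA)⟩
  obtain ⟨U, hU, hUc, hzU, u, hu, ⟨x, hx, hxb⟩, hbot⟩ := hpol z hzE
  obtain ⟨R, hR, hRU⟩ := Metric.nhds_basis_closedBall.mem_iff.1
    ((hU.inter hG).mem_nhds ⟨hzU, hzG⟩)
  obtain ⟨b, hb, hbz⟩ := Metric.mem_closure_iff.1 hzB (R / 3) (by positivity)
  obtain ⟨ρ, hρ, hρB⟩ := Metric.isOpen_iff.1 hB b hb
  have hsubR : closedBall b (R / 2) ⊆ U ∩ G := by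
    refine Subset.trans (closedBall_subset_closedBall' ?_) hRU
    rw [dist_comm]; linarith
  have hbR := annulus_aux hu hA hρ (hsubR.trans inter_subset_left)
    (fun w hw => by
      by_contra h
      exact hAB w hw (hρB (not_le.1 h)))
    (fun w hw hwA hwR => hbot w ⟨⟨(hsubR hwR).2, fun h =>
      (hunion w (hsubR hwR).2 h).elim hwA (hclA w hw)⟩, (hsubR hwR).1⟩)
  have hzb : z ∈ ball b (R / 2) := by rw [mem_ball]; linarith
  obtain ⟨a, ha1, ha2⟩ := mem_closure_iff.1 hzA _ isOpen_ball hzb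
  exact hxb (bot_aux hu hU hUc.isPreconnected (V := A ∩ ball b (R / 2)) (hA.inter isOpen_ball)
    ⟨a, (hsubR (ball_subset_closedBall ha1)).1, ha2, ha1⟩ (fun w hw => hbR w hw.1 hw.2) x hx)

theorem polydisc_eq_aux {n : ℕ} (c : Fin n → ℂ) (r : Fin n → ℝ) :
    polydisc c r = Set.univ.pi (fun i => ball (c i) (r i)) := by
  ext z
  simp [polydisc, dist_eq_norm]

/-- If `D ⊆ ℂⁿ` is a domain, `P, P̃` polydiscs with `P ⊆ D ∩ P̃`, `P ≠ ∅`, and for every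
`z ∈ P` and every complex line `L ∋ z` the set `(L ∩ P̃) \ D` is polar (in the line
coordinate), then `D ∩ P̃` is connected. -/
theorem connected_of_lines_polar {n : ℕ} (D : Set (Fin n → ℂ))
    (hopen : IsOpen D) (hconn : IsConnected D)
    (c c' : Fin n → ℂ) (r r' : Fin n → ℝ) (hr : ∀ i, 0 < r i) (hr' : ∀ i, 0 < r' i)
    (hP : polydisc c r ⊆ D ∩ polydisc c' r')
    (hlines : ∀ z ∈ polydisc c r, ∀ b : Fin n → ℂ, b ≠ 0 →
      PolarSet {lam : ℂ | z + lam • b ∈ polydisc c' r' ∧ z + lam • b ∉ D}) :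
    IsConnected (D ∩ polydisc c' r') := by
  have hPo : IsOpen (polydisc c' r') := by
    rw [polydisc_eq_aux]
    exact isOpen_set_pi finite_univ (fun i _ => isOpen_ball)
  have hPc : Convex ℝ (polydisc c' r') := by
    rw [polydisc_eq_aux]
    exact convex_pi (fun i _ => convex_ball _ _)
  have hc : c ∈ polydisc c r := fun i => by simpa using hr i
  refine ⟨⟨c, hP hc⟩, isPreconnected_of_forall c ?_⟩
  intro w hw
  by_cases hwc : w - c = 0
  · refine ⟨{c}, singleton_subset_iff.2 (hP hc), rfl, ?_, isPreconnected_singleton⟩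
    exact sub_eq_zero.1 hwc
  set g : ℂ → (Fin n → ℂ) := fun lam => c + lam • (w - c) with hg
  have hgc : Continuous g := by fun_prop
  have hG : Convex ℝ (g ⁻¹' polydisc c' r') := by
    intro x hx y hy a b ha hb hab
    have h := hPc hx hy ha hb hab
    have e : g (a • x + b • y) = a • g x + b • g y := by
      have hab' : (a : ℂ) + b = 1 := by exact_mod_cast hab
      ext i
      simp only [hg, Pi.add_apply, Pi.smul_apply, Pi.sub_apply, smul_eq_mul, Complex.real_smul]
      linear_combination (-(c i)) * hab'
    show g (a • x + b • y) ∈ polydisc c' r'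
    rw [e]; exact h
  have hpre := planar_aux (hPo.preimage hgc) hG.isPreconnected (hopen.preimage hgc)
    (hlines c hc (w - c) hwc)
  refine ⟨g '' (g ⁻¹' polydisc c' r' ∩ g ⁻¹' D), ?_, ⟨0, ?_, ?_⟩, ⟨1, ?_, ?_⟩,
    hpre.image g hgc.continuousOn⟩
  · rintro _ ⟨x, hx, rfl⟩
    exact ⟨hx.2, hx.1⟩
  · have : g 0 = c := by simp [hg]
    simp only [mem_inter_iff, mem_preimage, this]
    exact ⟨(hP hc).2, (hP hc).1⟩
  · simp [hg]
  · have : g 1 = w := by simp [hg]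
    simp only [mem_inter_iff, mem_preimage, this]
    exact ⟨hw.2, hw.1⟩
  · simp [hg]
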